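/- Let n ≥ 3 be an odd integer and θ ∈ (0, π/4]. There is a unique point t_{n−1,n}^θ ∈ (t_{n,n}, +∞) such that tan θ·H_n(t_{n−1,n}^θ) = H_n(t_{n−1,1}), where t_{n−1,1} is the smallest zero of H_{n−1}. Then: (1) for every t ≥ t_{n,n}, the function x ↦ Φ_n^θ(x,t) has exactly one zero in the interval (−∞, t_{n,1}]; (2) for every t > t_{n−1,n}^θ, the function x ↦ Φ_n^θ(x,t) has exactly one zero in ℝ; (3) if 0 < θ₁ < θ₂ ≤ π/4, then t_{n−1,n}^{θ₂} < t_{n−1,n}^{θ₁}. -/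

import Mathlib

open Polynomial Real Set

/-- Physicists' Hermite polynomials: `H 0 = 1`, `H 1 = 2X`,
`H (n+2) = 2X * H (n+1) - 2(n+1) * H n`. -/
noncomputable def hermiteH : ℕ → Polynomial ℝ
  | 0 => 1
  | 1 => Polynomial.C 2 * Polynomial.X
  | (n + 2) => Polynomial.C 2 * Polynomial.X * hermiteH (n + 1)
      - Polynomial.C ((2 * (n + 1) : ℕ) : ℝ) * hermiteH n

/-- `z : Fin m → ℝ` enumerates the zeros of `P` in increasing order. -/
def IsZeroEnum (P : Polynomial ℝ) (m : ℕ) (z : Fin m → ℝ) : Prop :=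
  StrictMono z ∧ (∀ i, P.eval (z i) = 0) ∧ (∀ x : ℝ, P.eval x = 0 → ∃ i, x = z i)

/-- The eigenfunction `Φ_n^θ`. -/
noncomputable def Phi (n : ℕ) (θ : ℝ) (p : ℝ × ℝ) : ℝ :=
  (Real.cos θ * (hermiteH n).eval p.1 + Real.sin θ * (hermiteH n).eval p.2) *
    Real.exp (-(p.1 ^ 2 + p.2 ^ 2) / 2)

/-- A critical zero of `u` : a common zero of `u` and its differential. -/
def IsCriticalZero (u : ℝ × ℝ → ℝ) (p : ℝ × ℝ) : Prop :=
  u p = 0 ∧ fderiv ℝ u p = 0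

/-- Nodal set of `u`. -/
def nodalSet (u : ℝ × ℝ → ℝ) : Set (ℝ × ℝ) := {p | u p = 0}

/-- The set of nodal domains of `u`, i.e. of connected components of the
complement of the nodal set. -/
def nodalDomains (u : ℝ × ℝ → ℝ) : Set (Set (ℝ × ℝ)) :=
  {C | ∃ p, u p ≠ 0 ∧ C = connectedComponentIn {q | u q ≠ 0} p}

/-!
Let `b` be the largest zero of `H_{n-1}`; by parity `t_{n-1,1} = -b` and `t_{n,1} = -t_{n,n}`.
Since `H_n' = 2n H_{n-1}`, the polynomial `H_n` increases strictly from `H_n(b) < 0` to `+∞` on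
`[b, ∞)`, and `t_{n,n}` is its only zero there. Up to a positive factor, `Φ_n^θ(-x, t)` is
`tan θ H_n(t) - H_n(x)`, so one has to solve `H_n(x) = tan θ H_n(t)`. In `[b, ∞)` there is exactly
one solution as soon as the right-hand side is at least `H_n(b)`. Elsewhere `H_n ≤ |H_n(b)|`: on
`[-b, b]` because Sonin's function `H_n² + 2n H_{n-1}²` increases with `|x|` and equals `H_n²` at
the zeros of `H_{n-1}`, on `(-∞, -b]` by monotonicity. Hence there is no other solution once
`tan θ H_n(t)` exceeds `|H_n(b)| = H_n(t_{n-1,1})`, that is, once `t > t_{n-1,n}^θ`.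
-/

open Filter

section Monotonicity

variable {α δ : Type*} [ConditionallyCompleteLinearOrder α] [TopologicalSpace α] [OrderTopology α]
  [DenselyOrdered α] [LinearOrder δ] [TopologicalSpace δ] [OrderClosedTopology δ]
  {f : α → δ} {b : α} {c : δ}

theorem lt_of_eventually_lt_of_ne (hf : ContinuousOn f (Ioi b)) (hev : ∀ᶠ x in atTop, c < f x)
    (hne : ∀ x, b < x → f x ≠ c) {x : α} (hx : b < x) : c < f x := by
  by_contra! hle
  obtain ⟨y, hy, hxy⟩ := (hev.and (eventually_ge_atTop x)).exists
  obtain ⟨z, hz, hfz⟩ :=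
    isPreconnected_Ioi.intermediate_value hx (hx.trans_le hxy) hf ⟨hle, hy.le⟩
  exact hne z hz hfz

theorem existsUnique_mem_Ici_eq (hf : ContinuousOn f (Ici b)) (hmono : StrictMonoOn f (Ici b))
    (htop : Tendsto f atTop atTop) (hc : f b ≤ c) : ∃! x, x ∈ Ici b ∧ f x = c := by
  obtain ⟨x, hx, hfx⟩ := intermediate_value_Ici hf htop hc
  exact ⟨x, ⟨hx, hfx⟩, fun y hy => hmono.injOn hy.1 hx (hy.2.trans hfx.symm)⟩

theorem existsUnique_gt_eq (hf : ContinuousOn f (Ici b)) (hmono : StrictMonoOn f (Ici b))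
    (htop : Tendsto f atTop atTop) (hc : f b < c) : ∃! x, b < x ∧ f x = c := by
  refine (existsUnique_congr fun x => and_congr_left fun hx => ?_).1
    (existsUnique_mem_Ici_eq hf hmono htop hc.le)
  exact ⟨fun hbx => hbx.lt_of_ne (by rintro rfl; exact hc.ne hx), le_of_lt⟩

end Monotonicity

theorem lt_of_mul_eq_mul_of_strictMonoOn {α : Type*} [LinearOrder α] {f : α → ℝ} {v s₁ s₂ : α}
    {k₁ k₂ : ℝ} (hf : StrictMonoOn f (Ici v)) (hv : 0 ≤ f v) (hk₁ : 0 < k₁) (hk : k₁ < k₂)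
    (hs₁ : v ≤ s₁) (hs₂ : v < s₂) (h : k₁ * f s₁ = k₂ * f s₂) : s₂ < s₁ := by
  have hpos : 0 < f s₂ := hv.trans_lt (hf self_mem_Ici hs₂.le hs₂)
  have hlt : k₁ * f s₂ < k₁ * f s₁ := h ▸ mul_lt_mul_of_pos_right hk hpos
  exact (hf.lt_iff_lt hs₂.le hs₁).1 (lt_of_mul_lt_mul_left hlt hk₁.le)

section Recurrences

theorem hermiteH_add_two (m : ℕ) :
    hermiteH (m + 2) = C 2 * X * hermiteH (m + 1) - C (2 * ((m : ℝ) + 1)) * hermiteH m := by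
  rw [hermiteH]
  push_cast
  rfl

theorem hermiteH_succ_and_derivative (m : ℕ) :
    hermiteH (m + 1) = C 2 * X * hermiteH m - derivative (hermiteH m) ∧
      derivative (hermiteH (m + 1)) = C (2 * ((m : ℝ) + 1)) * hermiteH m := by
  induction m with
  | zero => simp [hermiteH]
  | succ k ih =>
    obtain ⟨hsucc, hderiv⟩ := ih
    refine ⟨by rw [hderiv, hermiteH_add_two], ?_⟩
    have hcoeff : C (2 * (((k + 1 : ℕ) : ℝ) + 1)) = C 2 + C (2 * ((k : ℝ) + 1)) := by
      rw [← C_add]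
      push_cast
      ring_nf
    calc derivative (hermiteH (k + 2))
      _ = C 2 * hermiteH (k + 1) + C 2 * X * derivative (hermiteH (k + 1))
            - C (2 * ((k : ℝ) + 1)) * derivative (hermiteH k) := by
        simp only [hermiteH_add_two, derivative_sub, derivative_mul, derivative_C, derivative_X]
        ring
      _ = C 2 * hermiteH (k + 1)
            + C (2 * ((k : ℝ) + 1)) * (C 2 * X * hermiteH k - derivative (hermiteH k)) := by
        rw [hderiv]
        ring
      _ = C (2 * (((k + 1 : ℕ) : ℝ) + 1)) * hermiteH (k + 1) := by
        rw [← hsucc, hcoeff]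
        ring

theorem hermiteH_succ (m : ℕ) :
    hermiteH (m + 1) = C 2 * X * hermiteH m - derivative (hermiteH m) :=
  (hermiteH_succ_and_derivative m).1

theorem derivative_hermiteH_succ (m : ℕ) :
    derivative (hermiteH (m + 1)) = C (2 * ((m : ℝ) + 1)) * hermiteH m :=
  (hermiteH_succ_and_derivative m).2

theorem eval_neg_hermiteH (m : ℕ) (x : ℝ) :
    (hermiteH m).eval (-x) = (-1) ^ m * (hermiteH m).eval x := by
  induction m using Nat.twoStepInduction with
  | zero => simp [hermiteH]
  | one => simp [hermiteH]
  | more k ih₀ ih₁ =>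
    simp only [hermiteH_add_two, eval_sub, eval_mul, eval_C, eval_X, ih₀, ih₁]
    ring

theorem eval_neg_hermiteH_of_odd {m : ℕ} (hm : Odd m) (x : ℝ) :
    (hermiteH m).eval (-x) = -(hermiteH m).eval x := by
  rw [eval_neg_hermiteH, hm.neg_one_pow, neg_one_mul]

theorem hasDerivAt_eval_hermiteH (m : ℕ) (x : ℝ) :
    HasDerivAt (fun x => (hermiteH m).eval x)
      (2 * x * (hermiteH m).eval x - (hermiteH (m + 1)).eval x) x := by
  refine ((hermiteH m).hasDerivAt x).congr_deriv ?_
  simp [hermiteH_succ]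

theorem hasDerivAt_eval_hermiteH_succ (m : ℕ) (x : ℝ) :
    HasDerivAt (fun x => (hermiteH (m + 1)).eval x)
      (2 * ((m : ℝ) + 1) * (hermiteH m).eval x) x := by
  refine ((hermiteH (m + 1)).hasDerivAt x).congr_deriv ?_
  rw [derivative_hermiteH_succ, eval_mul, eval_C]

theorem hasDerivAt_eval_hermiteH_mul_exp (m : ℕ) (x : ℝ) :
    HasDerivAt (fun x => (hermiteH m).eval x * rexp (-x ^ 2))
      (-((hermiteH (m + 1)).eval x * rexp (-x ^ 2))) x := by
  refine ((hasDerivAt_eval_hermiteH m x).mul ((hasDerivAt_pow 2 x).fun_neg.exp)).congr_deriv ?_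
  push_cast
  ring

end Recurrences

section LeadingTerm

theorem natDegree_hermiteH_le (m : ℕ) : (hermiteH m).natDegree ≤ m := by
  induction m with
  | zero => simp [hermiteH]
  | succ k ih =>
    have hX : (C 2 * X * hermiteH k : ℝ[X]).natDegree ≤ k + 1 := by
      compute_degree
      omega
    have hderiv : (derivative (hermiteH k)).natDegree ≤ k + 1 :=
      (natDegree_derivative_le _).trans (by omega)
    rw [hermiteH_succ]
    exact natDegree_sub_le_of_le hX hderiv |>.trans (max_self _).le

theorem coeff_hermiteH_self (m : ℕ) : (hermiteH m).coeff m = 2 ^ m := by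
  induction m with
  | zero => simp [hermiteH]
  | succ k ih =>
    have hzero : (hermiteH k).coeff (k + 2) = 0 :=
      coeff_eq_zero_of_natDegree_lt ((natDegree_hermiteH_le k).trans_lt (by omega))
    rw [hermiteH_succ, coeff_sub, mul_assoc, coeff_C_mul, coeff_X_mul, coeff_derivative, ih, hzero]
    ring

theorem natDegree_hermiteH (m : ℕ) : (hermiteH m).natDegree = m :=
  natDegree_eq_of_le_of_coeff_ne_zero (natDegree_hermiteH_le m)
    (by rw [coeff_hermiteH_self]; positivity)

theorem hermiteH_ne_zero (m : ℕ) : hermiteH m ≠ 0 := by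
  intro h
  have hcoeff := coeff_hermiteH_self m
  rw [h, coeff_zero] at hcoeff
  exact (by positivity : (2 : ℝ) ^ m ≠ 0) hcoeff.symm

theorem tendsto_eval_hermiteH_atTop {m : ℕ} (hm : 0 < m) :
    Tendsto (fun x => (hermiteH m).eval x) atTop atTop := by
  apply tendsto_atTop_of_leadingCoeff_nonneg
  · exact natDegree_pos_iff_degree_pos.1 (by rwa [natDegree_hermiteH])
  · rw [leadingCoeff, natDegree_hermiteH, coeff_hermiteH_self]
    positivity

theorem eventually_eval_hermiteH_pos (m : ℕ) : ∀ᶠ x in atTop, 0 < (hermiteH m).eval x := by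
  rcases m.eq_zero_or_pos with rfl | hm
  · simp [hermiteH]
  · exact (tendsto_eval_hermiteH_atTop hm).eventually_gt_atTop 0

end LeadingTerm

section Zeros

/-- The set of real zeros of `H_m`. Only its extreme elements matter below, so the zeros are not
enumerated. -/
def hermiteZeros (m : ℕ) : Set ℝ := {x | (hermiteH m).eval x = 0}

variable {m : ℕ} {a b v x : ℝ}

theorem mem_hermiteZeros : x ∈ hermiteZeros m ↔ (hermiteH m).eval x = 0 := Iff.rfl

theorem neg_mem_hermiteZeros (hx : x ∈ hermiteZeros m) : -x ∈ hermiteZeros m := by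
  rw [mem_hermiteZeros, eval_neg_hermiteH, mem_hermiteZeros.1 hx, mul_zero]

theorem isGreatest_neg_hermiteZeros (ha : IsLeast (hermiteZeros m) a) :
    IsGreatest (hermiteZeros m) (-a) :=
  ⟨neg_mem_hermiteZeros ha.1, fun _ hx => le_neg_of_le_neg (ha.2 (neg_mem_hermiteZeros hx))⟩

theorem finite_hermiteZeros (m : ℕ) : (hermiteZeros m).Finite :=
  finite_setOfPred_isRoot (hermiteH_ne_zero m)

theorem eval_hermiteH_pos_of_gt (hb : b ∈ upperBounds (hermiteZeros m)) (hx : b < x) :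
    0 < (hermiteH m).eval x :=
  lt_of_eventually_lt_of_ne (hermiteH m).continuous.continuousOn (eventually_eval_hermiteH_pos m)
    (fun _ hy hzero => (hb hzero).not_gt hy) hx

theorem strictMonoOn_eval_hermiteH_succ (hb : b ∈ upperBounds (hermiteZeros m)) :
    StrictMonoOn (fun x => (hermiteH (m + 1)).eval x) (Ici b) := by
  refine strictMonoOn_of_hasDerivWithinAt_pos (convex_Ici b)
    (hermiteH (m + 1)).continuous.continuousOn
    (fun x _ => (hasDerivAt_eval_hermiteH_succ m x).hasDerivWithinAt) fun x hx => ?_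
  rw [interior_Ici, mem_Ioi] at hx
  have := eval_hermiteH_pos_of_gt hb hx
  positivity

theorem eval_hermiteH_succ_neg_of_isGreatest (hb : IsGreatest (hermiteZeros m) b) :
    (hermiteH (m + 1)).eval b < 0 := by
  by_contra! hnonneg
  -- `H_m exp(-x²)`, whose derivative is `-H_{m+1} exp(-x²)`, would decrease from its zero `b`.
  have hanti : StrictAntiOn (fun x => (hermiteH m).eval x * rexp (-x ^ 2)) (Ici b) := by
    refine strictAntiOn_of_hasDerivWithinAt_neg (convex_Ici b)
      (fun x _ => (hasDerivAt_eval_hermiteH_mul_exp m x).continuousAt.continuousWithinAt)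
      (fun x _ => (hasDerivAt_eval_hermiteH_mul_exp m x).hasDerivWithinAt) fun x hx => ?_
    rw [interior_Ici, mem_Ioi] at hx
    have : 0 < (hermiteH (m + 1)).eval x :=
      hnonneg.trans_lt (strictMonoOn_eval_hermiteH_succ hb.2 self_mem_Ici hx.le hx)
    rw [neg_lt_zero]
    positivity
  have hlt : b < b + 1 := lt_add_one b
  have hneg := hanti self_mem_Ici hlt.le hlt
  have hpos := eval_hermiteH_pos_of_gt hb.2 hlt
  simp only [mem_hermiteZeros.1 hb.1, zero_mul] at hneg
  exact hneg.not_gt (by positivity)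

theorem mem_upperBounds_hermiteZeros_of_succ (hv : v ∈ upperBounds (hermiteZeros (m + 1))) :
    v ∈ upperBounds (hermiteZeros m) := by
  intro x hx
  obtain ⟨b, hb⟩ := (finite_hermiteZeros m).isCompact.exists_isGreatest ⟨x, hx⟩
  refine (hb.2 hx).trans (le_of_not_gt fun hvb => ?_)
  exact (eval_hermiteH_succ_neg_of_isGreatest hb).not_gt (eval_hermiteH_pos_of_gt hv hvb)

theorem pos_of_mem_hermiteZeros (hx : x ∈ hermiteZeros m) : 0 < m := by
  rcases m.eq_zero_or_pos with rfl | hm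
  · simp [hermiteZeros, hermiteH] at hx
  · exact hm

theorem strictMonoOn_eval_hermiteH (hv : IsGreatest (hermiteZeros m) v) :
    StrictMonoOn (fun x => (hermiteH m).eval x) (Ici v) := by
  obtain ⟨k, rfl⟩ := Nat.exists_eq_succ_of_ne_zero (pos_of_mem_hermiteZeros hv.1).ne'
  exact strictMonoOn_eval_hermiteH_succ (mem_upperBounds_hermiteZeros_of_succ hv.2)

theorem eval_hermiteH_nonneg_of_ge (hv : IsGreatest (hermiteZeros m) v) (hx : v ≤ x) :
    0 ≤ (hermiteH m).eval x := by
  rw [← mem_hermiteZeros.1 hv.1]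
  exact (strictMonoOn_eval_hermiteH hv).monotoneOn self_mem_Ici hx hx

end Zeros

section Sonin

/-- Sonin's function of `H_{m+1}`, which majorizes `H_{m+1}²` with equality at the zeros of `H_m`.
The factor `2(m+1)` is the one for which the derivative has the sign of `x`. -/
noncomputable def hermiteSonin (m : ℕ) (x : ℝ) : ℝ :=
  (hermiteH (m + 1)).eval x ^ 2 + 2 * ((m : ℝ) + 1) * (hermiteH m).eval x ^ 2

theorem hasDerivAt_hermiteSonin (m : ℕ) (x : ℝ) :
    HasDerivAt (hermiteSonin m) (8 * ((m : ℝ) + 1) * x * (hermiteH m).eval x ^ 2) x := by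
  refine (((hasDerivAt_eval_hermiteH_succ m x).pow 2).add
    (((hasDerivAt_eval_hermiteH m x).pow 2).const_mul (2 * ((m : ℝ) + 1)))).congr_deriv ?_
  ring

theorem monotoneOn_hermiteSonin (m : ℕ) : MonotoneOn (hermiteSonin m) (Ici 0) := by
  refine monotoneOn_of_hasDerivWithinAt_nonneg (convex_Ici 0)
    (fun x _ => (hasDerivAt_hermiteSonin m x).continuousAt.continuousWithinAt)
    (fun x _ => (hasDerivAt_hermiteSonin m x).hasDerivWithinAt) fun x hx => ?_
  rw [interior_Ici, mem_Ioi] at hx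
  positivity

theorem hermiteSonin_abs (m : ℕ) (x : ℝ) : hermiteSonin m |x| = hermiteSonin m x := by
  rcases abs_choice x with h | h <;> rw [h]
  simp only [hermiteSonin, eval_neg_hermiteH, mul_pow, ← pow_mul, Even.neg_one_pow, even_two,
    Even.mul_left, one_mul]

theorem abs_eval_hermiteH_succ_le {m : ℕ} {x b : ℝ} (hb : b ∈ hermiteZeros m) (hx : |x| ≤ |b|) :
    |(hermiteH (m + 1)).eval x| ≤ |(hermiteH (m + 1)).eval b| := by
  rw [← sq_le_sq]
  calc (hermiteH (m + 1)).eval x ^ 2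
    _ ≤ hermiteSonin m x := le_add_of_nonneg_right (by positivity)
    _ ≤ hermiteSonin m b := by
      rw [← hermiteSonin_abs m x, ← hermiteSonin_abs m b]
      exact monotoneOn_hermiteSonin m (abs_nonneg x) (abs_nonneg b) hx
    _ = (hermiteH (m + 1)).eval b ^ 2 := by
      simp [hermiteSonin, mem_hermiteZeros.1 hb]

theorem eval_hermiteH_succ_le_of_le {m : ℕ} (hm : Even m) {x b : ℝ}
    (hb : IsGreatest (hermiteZeros m) b) (hx : x ≤ b) :
    (hermiteH (m + 1)).eval x ≤ -(hermiteH (m + 1)).eval b := by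
  rcases le_total (-b) x with hbx | hbx
  · have hle := abs_eval_hermiteH_succ_le hb.1 ((abs_le.2 ⟨hbx, hx⟩).trans (le_abs_self b))
    rw [abs_of_neg (eval_hermiteH_succ_neg_of_isGreatest hb)] at hle
    exact (le_abs_self _).trans hle
  · have hle := (strictMonoOn_eval_hermiteH_succ hb.2).monotoneOn self_mem_Ici
      (le_neg_of_le_neg hbx) (le_neg_of_le_neg hbx)
    simp only [eval_neg_hermiteH_of_odd hm.add_one] at hle
    exact le_neg_of_le_neg hle

end Sonin

section NodalSet

variable {n m : ℕ} {θ v b t : ℝ}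

theorem Phi_neg_eq_zero_iff (hn : Odd n) (hθ : cos θ ≠ 0) (x t : ℝ) :
    Phi n θ (-x, t) = 0 ↔ (hermiteH n).eval x = tan θ * (hermiteH n).eval t := by
  rw [Phi, mul_eq_zero, or_iff_left (exp_pos _).ne', eval_neg_hermiteH_of_odd hn,
    tan_eq_sin_div_cos, div_mul_eq_mul_div, eq_div_iff hθ]
  constructor <;> intro h <;> linarith

theorem existsUnique_mul_eval_hermiteH_eq (hv : IsGreatest (hermiteZeros n) v) {k c : ℝ}
    (hk : 0 < k) (hc : 0 < c) : ∃! s, v < s ∧ k * (hermiteH n).eval s = c := by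
  have hlt : (hermiteH n).eval v < c / k :=
    mem_hermiteZeros.1 hv.1 ▸ div_pos hc hk
  simpa only [eq_div_iff_mul_eq hk.ne', mul_comm k] using
    existsUnique_gt_eq (hermiteH n).continuous.continuousOn (strictMonoOn_eval_hermiteH hv)
      (tendsto_eval_hermiteH_atTop (pos_of_mem_hermiteZeros hv.1)) hlt

theorem existsUnique_mem_Iic_Phi_eq_zero (hn : Odd n) (hv : IsGreatest (hermiteZeros n) v)
    (hcos : cos θ ≠ 0) (htan : 0 ≤ tan θ) (ht : v ≤ t) :
    ∃! x, x ∈ Iic (-v) ∧ Phi n θ (x, t) = 0 := by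
  have hle : (hermiteH n).eval v ≤ tan θ * (hermiteH n).eval t :=
    mem_hermiteZeros.1 hv.1 ▸ mul_nonneg htan (eval_hermiteH_nonneg_of_ge hv ht)
  rw [(Equiv.neg ℝ).existsUnique_congr_left]
  simpa only [Equiv.neg_symm, Equiv.neg_apply, mem_Iic, neg_le_neg_iff, mem_Ici,
      Phi_neg_eq_zero_iff hn hcos] using
    existsUnique_mem_Ici_eq (hermiteH n).continuous.continuousOn (strictMonoOn_eval_hermiteH hv)
      (tendsto_eval_hermiteH_atTop hn.pos) hle

theorem existsUnique_Phi_eq_zero (hm : Even m) (hb : IsGreatest (hermiteZeros m) b)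
    (hcos : cos θ ≠ 0)
    (ht : -(hermiteH (m + 1)).eval b < tan θ * (hermiteH (m + 1)).eval t) :
    ∃! x, Phi (m + 1) θ (x, t) = 0 := by
  have hneg := eval_hermiteH_succ_neg_of_isGreatest hb
  rw [(Equiv.neg ℝ).existsUnique_congr_left]
  simp only [Equiv.neg_symm, Equiv.neg_apply, Phi_neg_eq_zero_iff hm.add_one hcos]
  refine (existsUnique_congr fun x => and_iff_right_of_imp fun hx => ?_).1
    (existsUnique_mem_Ici_eq (hermiteH (m + 1)).continuous.continuousOn
      (strictMonoOn_eval_hermiteH_succ hb.2) (tendsto_eval_hermiteH_atTop m.succ_pos)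
      (by linarith))
  by_contra hxb
  have := eval_hermiteH_succ_le_of_le hm hb (not_le.1 hxb).le
  linarith

end NodalSet

section Enumeration

variable {P : ℝ[X]} {k : ℕ} {z : Fin k → ℝ}

theorem IsZeroEnum.isLeast (hz : IsZeroEnum P k z) (hk : 0 < k) :
    IsLeast {x | P.eval x = 0} (z ⟨0, hk⟩) := by
  refine ⟨hz.2.1 _, fun x hx => ?_⟩
  obtain ⟨i, rfl⟩ := hz.2.2 x hx
  exact hz.1.monotone (Fin.mk_le_of_le_val (Nat.zero_le _))

theorem IsZeroEnum.isGreatest (hz : IsZeroEnum P k z) (hk : 0 < k) :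
    IsGreatest {x | P.eval x = 0} (z ⟨k - 1, Nat.sub_one_lt_of_lt hk⟩) := by
  refine ⟨hz.2.1 _, fun x hx => ?_⟩
  obtain ⟨i, rfl⟩ := hz.2.2 x hx
  exact hz.1.monotone (Fin.le_def.2 (Nat.le_sub_one_of_lt i.2))

end Enumeration

theorem barrier_lemma_horizontal_general {m : ℕ} (hm : Even m) {u v a : ℝ}
    (hu : IsLeast (hermiteZeros (m + 1)) u) (hv : IsGreatest (hermiteZeros (m + 1)) v)
    (ha : IsLeast (hermiteZeros m) a) :
    (∀ θ ∈ Ioo 0 (π / 2),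
      (∃! s, v < s ∧ tan θ * (hermiteH (m + 1)).eval s = (hermiteH (m + 1)).eval a) ∧
      ∀ s, v < s ∧ tan θ * (hermiteH (m + 1)).eval s = (hermiteH (m + 1)).eval a →
        (∀ t, v ≤ t → ∃! x, x ∈ Iic u ∧ Phi (m + 1) θ (x, t) = 0) ∧
        ∀ t, s < t → ∃! x, Phi (m + 1) θ (x, t) = 0) ∧
    ∀ θ₁ θ₂ s₁ s₂, 0 < θ₁ → θ₁ < θ₂ → θ₂ < π / 2 →
      v < s₁ ∧ tan θ₁ * (hermiteH (m + 1)).eval s₁ = (hermiteH (m + 1)).eval a →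
      v < s₂ ∧ tan θ₂ * (hermiteH (m + 1)).eval s₂ = (hermiteH (m + 1)).eval a →
      s₂ < s₁ := by
  have hb := isGreatest_neg_hermiteZeros ha
  have hmono := strictMonoOn_eval_hermiteH hv
  have hHb := eval_neg_hermiteH_of_odd hm.add_one a
  obtain rfl : u = -v := neg_eq_iff_eq_neg.1 ((isGreatest_neg_hermiteZeros hu).unique hv)
  refine ⟨fun θ ⟨hθ₀, hθ₁⟩ => ?_, fun θ₁ θ₂ s₁ s₂ hθ₁ hθ hθ₂ ⟨hs₁, heq₁⟩ ⟨hs₂, heq₂⟩ => ?_⟩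
  · have hcos : cos θ ≠ 0 := (cos_pos_of_mem_Ioo ⟨by linarith, hθ₁⟩).ne'
    have htan : 0 < tan θ := tan_pos_of_pos_of_lt_pi_div_two hθ₀ hθ₁
    have hpos : 0 < (hermiteH (m + 1)).eval a := by
      linarith [eval_hermiteH_succ_neg_of_isGreatest hb]
    refine ⟨existsUnique_mul_eval_hermiteH_eq hv htan hpos, fun s ⟨hs, heq⟩ =>
      ⟨fun t ht => existsUnique_mem_Iic_Phi_eq_zero hm.add_one hv hcos htan.le ht,
        fun t ht => ?_⟩⟩
    refine existsUnique_Phi_eq_zero hm hb hcos ?_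
    rw [hHb, neg_neg, ← heq]
    exact mul_lt_mul_of_pos_left (hmono hs.le (hs.trans ht).le ht) htan
  · have htan₁ : 0 < tan θ₁ := tan_pos_of_pos_of_lt_pi_div_two hθ₁ (hθ.trans hθ₂)
    have htan : tan θ₁ < tan θ₂ := tan_lt_tan_of_lt_of_lt_pi_div_two (by linarith) hθ₂ hθ
    exact lt_of_mul_eq_mul_of_strictMonoOn hmono (eval_hermiteH_nonneg_of_ge hv le_rfl) htan₁ htan
      hs₁.le hs₂ (heq₁.trans heq₂.symm)

/-- (Barrier lemma, horizontal version.) Let `n ≥ 3` be odd.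
For `θ ∈ (0, π/4]` there is a unique `s > t_{n,n}` with
`tan θ * H_n(s) = H_n(t_{n-1,1})`; denoting it `t_{n-1,n}^θ`:
(1) for every `t ≥ t_{n,n}`, `x ↦ Φ_n^θ(x,t)` has exactly one zero in `(-∞, t_{n,1}]`;
(2) for every `t > t_{n-1,n}^θ`, `x ↦ Φ_n^θ(x,t)` has exactly one zero in `ℝ`;
(3) if `0 < θ₁ < θ₂ ≤ π/4`, then `t_{n-1,n}^{θ₂} < t_{n-1,n}^{θ₁}`. -/
theorem barrier_lemma_horizontal
    (n : ℕ) (hn3 : 3 ≤ n) (hodd : Odd n)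
    (tn : Fin n → ℝ) (htn : IsZeroEnum (hermiteH n) n tn)
    (tz : Fin (n - 1) → ℝ) (htz : IsZeroEnum (hermiteH (n - 1)) (n - 1) tz) :
    (∀ θ ∈ Set.Ioc (0:ℝ) (π / 4),
      (∃! s : ℝ, tn ⟨n - 1, by omega⟩ < s ∧
        Real.tan θ * (hermiteH n).eval s = (hermiteH n).eval (tz ⟨0, by omega⟩)) ∧
      ∀ s : ℝ, (tn ⟨n - 1, by omega⟩ < s ∧
          Real.tan θ * (hermiteH n).eval s = (hermiteH n).eval (tz ⟨0, by omega⟩)) →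
        (∀ t : ℝ, tn ⟨n - 1, by omega⟩ ≤ t →
          ∃! x : ℝ, x ∈ Set.Iic (tn ⟨0, by omega⟩) ∧ Phi n θ (x, t) = 0) ∧
        (∀ t : ℝ, s < t → ∃! x : ℝ, Phi n θ (x, t) = 0)) ∧
    (∀ θ₁ θ₂ s₁ s₂ : ℝ, 0 < θ₁ → θ₁ < θ₂ → θ₂ ≤ π / 4 →
      (tn ⟨n - 1, by omega⟩ < s₁ ∧
        Real.tan θ₁ * (hermiteH n).eval s₁ = (hermiteH n).eval (tz ⟨0, by omega⟩)) →
      (tn ⟨n - 1, by omega⟩ < s₂ ∧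
        Real.tan θ₂ * (hermiteH n).eval s₂ = (hermiteH n).eval (tz ⟨0, by omega⟩)) →
      s₂ < s₁) := by
  obtain ⟨m, rfl⟩ : ∃ m, n = m + 1 := ⟨n - 1, by omega⟩
  have hm : Even m := by simpa [Nat.odd_add_one] using hodd
  have hπ := pi_pos
  have H := barrier_lemma_horizontal_general hm (htn.isLeast m.succ_pos)
    (htn.isGreatest m.succ_pos) (htz.isLeast (by omega))
  exact ⟨fun θ hθ => H.1 θ ⟨hθ.1, by linarith [hθ.2]⟩,
    fun θ₁ θ₂ s₁ s₂ hθ₁ hθ hθ₂ => H.2 θ₁ θ₂ s₁ s₂ hθ₁ hθ (by linarith)⟩
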